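/- (Theorem 1, part 2: limiting expected squared jump distance.) In the setting of Theorem 1 part 1 (densities π^(d) with L^(d) = log π^(d) twice continuously differentiable, scalings s^(d) satisfying the four limiting conditions (i)–(iv), λ^(d) = ℓ/s^(d), X^(d) ∼ π^(d), Z^(d) ∼ N(0, I_d) and B independent with density ρ satisfying ρ(b) = e^{−b} ρ(−b)), let T^(d) be d×d symmetric positive-definite matrices satisfying Trace[(T^(d))²] / (Trace[T^(d)])² → 0 as d → ∞. Define ‖z‖²_{T^(d)} = ⟨z, T^(d) z⟩. Then the rescaled expected squared jump distance ((s^(d))² / Trace[T^(d)]) · (λ^(d))² · E[ ‖Z^(d)‖²_{T^(d)} · min(1, exp( L^(d)(X^(d) + λ^(d) Z^(d)) − L^(d)(X^(d)) + B )) ] converges, as d → ∞, to J(ℓ) := ℓ² · α(ℓ), where α(ℓ) = 2 · E[Φ(B/ℓ − ℓ/2)] and Φ is the standard normal cumulative distribution function. -/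

import Mathlib

open MeasureTheory ProbabilityTheory Real Filter Topology

/-- The standard normal cumulative distribution function `Φ`. -/
noncomputable def stdNormalCDF (x : ℝ) : ℝ :=
  ∫ t in Set.Iic x, Real.exp (-t ^ 2 / 2) / Real.sqrt (2 * Real.pi)

/-- The standard Gaussian measure `N(0, I_d)` on `ℝ^d`. -/
noncomputable def stdGaussian (d : ℕ) : Measure (Fin d → ℝ) :=
  Measure.pi fun _ : Fin d => gaussianReal 0 1

/-- The Hessian matrix `H(x) = [∂²_{ij} L(x)]` of a function `L` on `ℝ^d`. -/
noncomputable def hessian {d : ℕ} (L : (Fin d → ℝ) → ℝ) (x : Fin d → ℝ) :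
    Matrix (Fin d) (Fin d) ℝ := fun i j =>
  fderiv ℝ (fun y => fderiv ℝ L y (Pi.single j 1)) x (Pi.single i 1)

/-- The squared Euclidean norm of the gradient of `L` at `x`, `‖∇L(x)‖²`. -/
noncomputable def gradNormSq {d : ℕ} (L : (Fin d → ℝ) → ℝ) (x : Fin d → ℝ) : ℝ :=
  ∑ i, (fderiv ℝ L x (Pi.single i 1)) ^ 2


lemma aux_tozero {Ω : ℕ → Type} [∀ d, MeasurableSpace (Ω d)] (P : ∀ d, Measure (Ω d))
    [∀ d, IsProbabilityMeasure (P d)] (R : ∀ d, Ω d → ℝ) (hR : ∀ d, Measurable (R d))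
    (h : ∀ ε > (0 : ℝ), Tendsto (fun d => P d {x | ε < |R d x|}) atTop (𝓝 0)) :
    Tendsto (fun d => ∫ x, min 1 |R d x| ∂(P d)) atTop (𝓝 0) := by
  rw [Metric.tendsto_atTop]
  intro ε hε
  have h1 := h (ε / 2) (by positivity)
  have h2 : Tendsto (fun d => (P d).real {x | ε / 2 < |R d x|}) atTop (𝓝 0) := by
    have := (ENNReal.tendsto_toReal ENNReal.zero_ne_top).comp h1
    simpa [Measure.real, Function.comp_def] using this
  obtain ⟨N, hN⟩ := Metric.tendsto_atTop.1 h2 (ε / 2) (by positivity)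
  refine ⟨N, fun d hd => ?_⟩
  have h3 := hN d hd
  rw [Real.dist_eq, sub_zero] at h3 ⊢
  have hm : MeasurableSet {x | ε / 2 < |R d x|} :=
    measurableSet_lt measurable_const (hR d).abs
  have h4 : ∫ x, min 1 |R d x| ∂(P d) ≤
      ∫ x, (ε / 2 + Set.indicator {x | ε / 2 < |R d x|} (fun _ => (1 : ℝ)) x) ∂(P d) := by
    apply integral_mono_of_nonneg
    · exact ae_of_all _ fun x => le_min zero_le_one (abs_nonneg _)
    · exact (integrable_const _).add ((integrable_const _).indicator hm)
    · refine ae_of_all _ fun x => ?_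
      dsimp only
      by_cases hx : ε / 2 < |R d x|
      · rw [Set.indicator_of_mem (by exact hx)]
        exact (min_le_left _ _).trans (by linarith)
      · rw [Set.indicator_of_notMem (by exact hx)]
        push Not at hx
        exact (min_le_right _ _).trans (by linarith)
  rw [integral_add (integrable_const _) ((integrable_const _).indicator hm),
    integral_indicator hm] at h4
  simp at h4
  rw [abs_of_nonneg (integral_nonneg fun x => le_min zero_le_one (abs_nonneg _))]
  have := le_abs_self ((P d).real {x | ε / 2 < |R d x|})
  linarith

instance aux_prob (d : ℕ) : IsProbabilityMeasure (stdGaussian d) := by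
  unfold _root_.stdGaussian; infer_instance

lemma aux_lin {d : ℕ} (v : Fin d → ℝ) (h : ℝ → ℝ) (hc : Continuous h) :
    ∫ z, h (∑ i, v i * z i) ∂(stdGaussian d)
      = ∫ g, h (Real.sqrt (∑ i, v i ^ 2) * g) ∂(gaussianReal 0 1) := by
  have key : (stdGaussian d).map (fun z => ∑ i, v i * z i)
      = (gaussianReal 0 1).map (fun g => Real.sqrt (∑ i, v i ^ 2) * g) := by
    rw [gaussianReal_map_const_mul]
    let w : EuclideanSpace ℝ (Fin d) := WithLp.toLp 2 v
    have h1 : (fun z : Fin d → ℝ => ∑ i, v i * z i)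
        = (innerSL ℝ w) ∘ (WithLp.toLp 2) := by
      ext z
      simp [w, PiLp.inner_apply, mul_comm]
    have h2 : (stdGaussian d).map (WithLp.toLp 2)
        = ProbabilityTheory.stdGaussian (EuclideanSpace ℝ (Fin d)) := map_pi_eq_stdGaussian
    rw [h1, ← Measure.map_map (by fun_prop) (by fun_prop), h2, IsGaussian.map_eq_gaussianReal,
      integral_strongDual_stdGaussian, variance_dual_stdGaussian]
    congr 1
    · simp
    · ext
      have h3 : ‖w‖ = Real.sqrt (∑ i, v i ^ 2) := by
        rw [EuclideanSpace.norm_eq]; simp [w]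
      simp [h3]
  have e1 := integral_map (μ := stdGaussian d) (φ := fun z => ∑ i, v i * z i) (f := h)
    (Measurable.aemeasurable (by fun_prop)) hc.aestronglyMeasurable
  have e2 := integral_map (μ := gaussianReal 0 1)
    (φ := fun g => Real.sqrt (∑ i, v i ^ 2) * g) (f := h)
    (Measurable.aemeasurable (by fun_prop)) hc.aestronglyMeasurable
  rw [← e1, ← e2, key]

/-- quadratic form -/
noncomputable def auxQ {d : ℕ} (A : Matrix (Fin d) (Fin d) ℝ) (z : Fin d → ℝ) : ℝ :=
  ∑ i, ∑ j, z i * A i j * z j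

lemma auxQ_eq {d : ℕ} (A : Matrix (Fin d) (Fin d) ℝ) (z : Fin d → ℝ) :
    auxQ A z = dotProduct z (A.mulVec z) := by
  simp [auxQ, dotProduct, Matrix.mulVec, Finset.mul_sum, mul_assoc]

lemma auxQ_cont {d : ℕ} (A : Matrix (Fin d) (Fin d) ℝ) : Continuous (auxQ A) := by
  unfold auxQ; fun_prop

lemma aux_diag {d : ℕ} (A : Matrix (Fin d) (Fin d) ℝ) (hA : A.IsSymm) :
    ∃ (c : Fin d → ℝ), ∑ i, c i = A.trace ∧ ∑ i, c i ^ 2 = (A * A).trace ∧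
      (stdGaussian d).map (auxQ A) = (stdGaussian d).map (fun x => ∑ i, c i * x i ^ 2) := by
  have hH : A.IsHermitian := by
    rw [Matrix.IsHermitian, Matrix.conjTranspose_eq_transpose_of_trivial]; exact hA
  set U : Matrix (Fin d) (Fin d) ℝ := (hH.eigenvectorUnitary : Matrix (Fin d) (Fin d) ℝ) with hU
  have hUU : U.transpose * U = 1 := by
    have := Matrix.mem_unitaryGroup_iff'.1 hH.eigenvectorUnitary.2
    rwa [Matrix.star_eq_conjTranspose, Matrix.conjTranspose_eq_transpose_of_trivial] at this
  have hspec : A = U * Matrix.diagonal hH.eigenvalues * U.transpose := by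
    have := hH.spectral_theorem
    rw [Unitary.conjStarAlgAut_apply] at this
    rw [Matrix.star_eq_conjTranspose, Matrix.conjTranspose_eq_transpose_of_trivial] at this
    simpa using this
  refine ⟨hH.eigenvalues, ?_, ?_, ?_⟩
  · rw [hH.trace_eq_sum_eigenvalues]; simp
  · have : A * A = U * (Matrix.diagonal hH.eigenvalues * Matrix.diagonal hH.eigenvalues) * U.transpose := by
      conv_lhs => rw [hspec]
      calc _ = U * Matrix.diagonal hH.eigenvalues * (U.transpose * U) * Matrix.diagonal hH.eigenvalues * U.transpose := by
            simp only [Matrix.mul_assoc]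
        _ = _ := by rw [hUU]; simp only [Matrix.mul_assoc, Matrix.one_mul]
    rw [this, Matrix.trace_mul_cycle, hUU, Matrix.one_mul, Matrix.diagonal_mul_diagonal, Matrix.trace_diagonal]
    simp [sq]
  · have h2 : (stdGaussian d).map (WithLp.toLp 2)
        = ProbabilityTheory.stdGaussian (EuclideanSpace ℝ (Fin d)) := map_pi_eq_stdGaussian
    have h3 := stdGaussian_eq_map_pi_orthonormalBasis hH.eigenvectorBasis
    have h4 : auxQ A = (fun y : EuclideanSpace ℝ (Fin d) => auxQ A (WithLp.ofLp y)) ∘ (WithLp.toLp 2) := by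
      ext z; simp
    have hm : Measurable (fun y : EuclideanSpace ℝ (Fin d) => auxQ A (WithLp.ofLp y)) := by
      have := (auxQ_cont A).measurable
      fun_prop
    rw [h4, ← Measure.map_map hm (by fun_prop), h2, h3, Measure.map_map hm (by fun_prop)]
    unfold _root_.stdGaussian
    congr 1
    ext x
    have h5 : WithLp.ofLp (∑ i, x i • hH.eigenvectorBasis i) = U.mulVec x := by
      ext k
      simp [Matrix.mulVec, dotProduct, hU, Matrix.IsHermitian.eigenvectorUnitary_apply, mul_comm]
    simp only [Function.comp]
    rw [h5, auxQ_eq]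
    have h6 : A.mulVec (U.mulVec x) = U.mulVec ((Matrix.diagonal hH.eigenvalues).mulVec x) := by
      conv_lhs => rw [hspec]
      simp only [Matrix.mulVec_mulVec, Matrix.mul_assoc, hUU, Matrix.mul_one]
    rw [h6, Matrix.dotProduct_mulVec, ← Matrix.mulVec_transpose, Matrix.mulVec_mulVec, hUU, Matrix.one_mulVec]
    simp [dotProduct, Matrix.mulVec_diagonal]
    refine Finset.sum_congr rfl fun i _ => by ring

lemma aux_memLp_sq : MemLp (fun x : ℝ => x ^ 2) 2 (gaussianReal 0 1) := by
  have h := memLp_id_gaussianReal (μ := 0) (v := 1) 4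
  have h2 := h.norm_rpow_div (q := 2)
  have : (4 / 2 : ENNReal) = 2 := by
    rw [show (4 : ENNReal) = 2 * 2 by norm_num]
    exact ENNReal.mul_div_cancel_right (by norm_num) (by norm_num)
  simpa [this] using h2

lemma aux_int_sq : ∫ x : ℝ, x ^ 2 ∂(gaussianReal 0 1) = 1 := by
  have := variance_fun_id_gaussianReal (μ := 0) (v := 1)
  rw [variance_of_integral_eq_zero (by fun_prop) (by simp)] at this
  simpa using this

lemma aux_quad {d : ℕ} (A : Matrix (Fin d) (Fin d) ℝ) (hA : A.IsSymm) :
    Integrable (auxQ A) (stdGaussian d) ∧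
    ∫ z, |auxQ A z - A.trace| ∂(stdGaussian d) ≤
      Real.sqrt (Var[fun x => x ^ 2; gaussianReal 0 1] * (A * A).trace) := by
  obtain ⟨c, hc1, hc2, hc3⟩ := aux_diag A hA
  set q : (Fin d → ℝ) → ℝ := fun x => ∑ i, c i * x i ^ 2 with hq
  have hqm : Measurable q := by fun_prop
  have hid : IdentDistrib (auxQ A) q (stdGaussian d) (stdGaussian d) :=
    ⟨(auxQ_cont A).aemeasurable, hqm.aemeasurable, hc3⟩
  have hLi : ∀ i : Fin d, MemLp (fun x : ℝ => c i * x ^ 2) 2 (gaussianReal 0 1) :=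
    fun i => aux_memLp_sq.const_mul _
  have hq2 : MemLp q 2 (stdGaussian d) := by
    apply memLp_finsetSum
    intro i _
    exact (hLi i).comp_measurePreserving (measurePreserving_eval (fun _ : Fin d => gaussianReal 0 1) i)
  have hA2 : MemLp (auxQ A) 2 (stdGaussian d) := hid.symm.memLp_snd hq2
  refine ⟨hA2.integrable (by norm_num), ?_⟩
  have hmean : ∫ z, auxQ A z ∂(stdGaussian d) = A.trace := by
    rw [hid.integral_eq, ← hc1, hq, integral_finsetSum]
    · refine Finset.sum_congr rfl fun i _ => ?_
      have := integral_comp_eval (μ := fun _ : Fin d => gaussianReal 0 1) (i := i)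
        (f := fun x : ℝ => c i * x ^ 2) (by fun_prop)
      unfold _root_.stdGaussian
      rw [this, integral_const_mul, aux_int_sq, mul_one]
    · intro i _
      exact ((hLi i).comp_measurePreserving (measurePreserving_eval (fun _ : Fin d => gaussianReal 0 1) i)).integrable (by norm_num)
  have hvar : Var[auxQ A; stdGaussian d] = Var[fun x => x ^ 2; gaussianReal 0 1] * (A * A).trace := by
    rw [hid.variance_eq]
    have := variance_sum_pi (μ := fun _ : Fin d => gaussianReal 0 1) hLi
    have h7 : (∑ i, fun ω : Fin d → ℝ => c i * ω i ^ 2) = q := by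
      ext x; simp [hq]
    rw [h7] at this
    unfold _root_.stdGaussian
    rw [this, ← hc2, Finset.mul_sum]
    refine Finset.sum_congr rfl fun i _ => ?_
    rw [variance_const_mul, mul_comm]
  have hv2 := variance_eq_integral (μ := stdGaussian d) (auxQ_cont A).aemeasurable
  rw [hmean, hvar] at hv2
  have hD : MemLp (fun z => |auxQ A z - A.trace|) 2 (stdGaussian d) := (hA2.sub (memLp_const _)).abs
  apply Real.le_sqrt_of_sq_le
  rw [hv2]
  have h8 := variance_nonneg (fun z => |auxQ A z - A.trace|) (stdGaussian d)
  rw [variance_eq_sub hD] at h8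
  simp at h8
  exact h8

lemma aux_hess {d : ℕ} {L : (Fin d → ℝ) → ℝ} (hL : ContDiff ℝ 2 L) (x : Fin d → ℝ) (i j : Fin d) :
    hessian L x i j = fderiv ℝ (fderiv ℝ L) x (Pi.single i 1) (Pi.single j 1) := by
  unfold hessian
  have h1 : Differentiable ℝ (fderiv ℝ L) :=
    (hL.fderiv_right (m := 1) (by norm_num)).differentiable (by norm_num)
  have := ((h1 x).hasFDerivAt.clm_apply (hasFDerivAt_const (Pi.single j (1 : ℝ) : Fin d → ℝ) x)).fderiv
  rw [this]; simp

lemma aux_hess_symm {d : ℕ} {L : (Fin d → ℝ) → ℝ} (hL : ContDiff ℝ 2 L) (x : Fin d → ℝ) :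
    (hessian L x).IsSymm := by
  ext i j
  rw [Matrix.transpose_apply, aux_hess hL, aux_hess hL]
  exact (hL.contDiffAt.isSymmSndFDerivAt (by simp)) _ _

lemma aux_hess_cont {d : ℕ} {L : (Fin d → ℝ) → ℝ} (hL : ContDiff ℝ 2 L) :
    Continuous (hessian L) := by
  refine continuous_pi fun i => continuous_pi fun j => ?_
  simp_rw [aux_hess hL]
  have h1 : Continuous (fderiv ℝ (fderiv ℝ L)) :=
    (hL.fderiv_right (m := 1) (by norm_num)).continuous_fderiv (by norm_num)
  fun_prop

lemma aux_vec {d : ℕ} (z : Fin d → ℝ) : z = ∑ i, z i • (Pi.single i 1 : Fin d → ℝ) := by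
  ext k; simp [Finset.sum_apply, Pi.single_apply]

lemma aux_hess_quad {d : ℕ} {L : (Fin d → ℝ) → ℝ} (hL : ContDiff ℝ 2 L) (x z : Fin d → ℝ) :
    fderiv ℝ (fderiv ℝ L) x z z = auxQ (hessian L x) z := by
  conv_lhs => rw [aux_vec z]
  simp only [map_sum, map_smul, FunLike.coe_sum, Finset.sum_apply, auxQ, aux_hess hL,
    FunLike.coe_smul, Pi.smul_apply, smul_eq_mul, Finset.mul_sum]
  rw [Finset.sum_comm]
  refine Finset.sum_congr rfl fun i _ => Finset.sum_congr rfl fun j _ => by ring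

lemma aux_grad {d : ℕ} (L : (Fin d → ℝ) → ℝ) (x z : Fin d → ℝ) :
    fderiv ℝ L x z = ∑ i, fderiv ℝ L x (Pi.single i 1) * z i := by
  conv_lhs => rw [aux_vec z]
  simp [mul_comm]

lemma aux_taylor {d : ℕ} {L : (Fin d → ℝ) → ℝ} (hL : ContDiff ℝ 2 L) (x w : Fin d → ℝ) :
    ∃ t ∈ Set.Ioo (0 : ℝ) 1, L (x + w) - L x - fderiv ℝ L x w
      = fderiv ℝ (fderiv ℝ L) (x + t • w) w w / 2 := by
  set g : ℝ → ℝ := fun t => L (x + t • w) with hg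
  have hline : ∀ t : ℝ, HasDerivAt (fun t : ℝ => x + t • w) w t := fun t => by
    simpa using ((hasDerivAt_id t).smul_const w).const_add x
  have h1 : ∀ t, HasDerivAt g (fderiv ℝ L (x + t • w) w) t := fun t =>
    ((hL.differentiable (by norm_num) _).hasFDerivAt).comp_hasDerivAt t (hline t)
  have hd : Differentiable ℝ (fderiv ℝ L) :=
    (hL.fderiv_right (m := 1) (by norm_num)).differentiable (by norm_num)
  have h2 : ∀ t, HasDerivAt (fun t : ℝ => fderiv ℝ L (x + t • w) w)
      (fderiv ℝ (fderiv ℝ L) (x + t • w) w w) t := fun t => by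
    have := ((hd _).hasFDerivAt.comp_hasDerivAt t (hline t)).clm_apply (hasDerivAt_const t w)
    simpa using this
  have hgc : ContDiff ℝ 2 g := by
    rw [hg]; fun_prop
  obtain ⟨t, ht, he⟩ := taylor_mean_remainder_lagrange_iteratedDeriv (f := g) (n := 1)
    (x := 1) (x₀ := 0) (by norm_num) (by norm_num; exact hgc.contDiffOn)
  rw [Set.uIoo_of_le zero_le_one] at ht
  refine ⟨t, ht, ?_⟩
  have e1 : deriv g = fun t => fderiv ℝ L (x + t • w) w := funext fun t => (h1 t).deriv
  have e2 : iteratedDeriv 2 g t = fderiv ℝ (fderiv ℝ L) (x + t • w) w w := by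
    rw [iteratedDeriv_succ, iteratedDeriv_one, e1]; exact (h2 t).deriv
  have e3 : derivWithin g (Set.Icc 0 1) 0 = fderiv ℝ L x w := by
    rw [(h1 0).hasDerivWithinAt.derivWithin (uniqueDiffOn_Icc zero_lt_one 0 (by simp))]; simp
  rw [taylorWithinEval_succ, taylor_within_zero_eval] at he
  simp [e2, iteratedDerivWithin_one, e3] at he
  simp [hg] at he
  rw [← he]; ring

lemma aux_rem {d : ℕ} {L : (Fin d → ℝ) → ℝ} (hL : ContDiff ℝ 2 L) (x z : Fin d → ℝ)
    (ℓ s : ℝ) (hs : 0 < s) :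
    |L (x + (ℓ / s) • z) - L x - (ℓ / s) * (∑ i, fderiv ℝ L x (Pi.single i 1) * z i)
      - ℓ ^ 2 / 2 * (auxQ (hessian L x) z / s ^ 2)| ≤ ℓ ^ 2 / 2 *
      ⨆ t ∈ Set.Ioo (0 : ℝ) 1, |(∑ i, ∑ j, z i *
            ((hessian L (x + (t * ℓ / s) • z) - hessian L x) i j) * z j) / s ^ 2| := by
  set v : ℝ → ℝ := fun t => |(∑ i, ∑ j, z i *
            ((hessian L (x + (t * ℓ / s) • z) - hessian L x) i j) * z j) / s ^ 2| with hv
  obtain ⟨t, ht, he⟩ := aux_taylor hL x ((ℓ / s) • z)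
  have hvc : Continuous v := by
    have := aux_hess_cont hL
    have h1 : Continuous fun t : ℝ => hessian L (x + (t * ℓ / s) • z) :=
      this.comp (by fun_prop)
    have h2 : ∀ i j, Continuous fun t : ℝ => hessian L (x + (t * ℓ / s) • z) i j :=
      fun i j => h1.matrix_elem i j
    rw [hv]
    simp only [Matrix.sub_apply]
    fun_prop
  have hle : v t ≤ ⨆ t ∈ Set.Ioo (0 : ℝ) 1, v t := by
    obtain ⟨M, hM⟩ := (isCompact_Icc (a := (0 : ℝ)) (b := 1)).bddAbove_image hvc.continuousOn
    have hM' : ∀ t ∈ Set.Ioo (0 : ℝ) 1, v t ≤ M := fun t ht =>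
      hM (Set.mem_image_of_mem v (Set.Ioo_subset_Icc_self ht))
    have hM0 : 0 ≤ M := (abs_nonneg _).trans (hM' t ht)
    have hb : BddAbove (Set.range fun t => ⨆ (_ : t ∈ Set.Ioo (0 : ℝ) 1), v t) := by
      refine ⟨M, ?_⟩
      rintro _ ⟨u, rfl⟩
      dsimp only
      by_cases hu : u ∈ Set.Ioo (0 : ℝ) 1
      · rw [ciSup_pos hu]; exact hM' u hu
      · haveI : IsEmpty (u ∈ Set.Ioo (0 : ℝ) 1) := ⟨hu⟩
        rw [Real.iSup_of_isEmpty]; exact hM0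
    have := le_ciSup hb t
    rwa [ciSup_pos ht] at this
  have hvt : v t = |(auxQ (hessian L (x + (t * ℓ / s) • z)) z - auxQ (hessian L x) z) / s ^ 2| := by
    simp only [hv, auxQ, Matrix.sub_apply, mul_sub, sub_mul, Finset.sum_sub_distrib]
  have e1 : fderiv ℝ L x ((ℓ / s) • z) = (ℓ / s) * (∑ i, fderiv ℝ L x (Pi.single i 1) * z i) := by
    rw [map_smul, aux_grad, smul_eq_mul]
  have e2 : fderiv ℝ (fderiv ℝ L) (x + t • (ℓ / s) • z) ((ℓ / s) • z) ((ℓ / s) • z)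
      = ℓ ^ 2 * (auxQ (hessian L (x + (t * ℓ / s) • z)) z / s ^ 2) := by
    rw [smul_smul, ← mul_div_assoc, map_smul, map_smul, FunLike.coe_smul, Pi.smul_apply,
      aux_hess_quad hL, smul_eq_mul, smul_eq_mul]
    field_simp
  rw [e1, e2] at he
  rw [he]
  calc _ = |ℓ ^ 2 / 2 * ((auxQ (hessian L (x + (t * ℓ / s) • z)) z - auxQ (hessian L x) z) / s ^ 2)| := by
        congr 1; ring
    _ = ℓ ^ 2 / 2 * v t := by
        rw [hvt, abs_mul, abs_of_nonneg (by positivity)]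
    _ ≤ _ := by gcongr

noncomputable def auxf (w : ℝ) : ℝ := min 1 (Real.exp w)

lemma auxf_cont : Continuous auxf := by unfold auxf; fun_prop

lemma auxf_nonneg (w : ℝ) : 0 ≤ auxf w := le_min zero_le_one (Real.exp_pos _).le

lemma auxf_le (w : ℝ) : auxf w ≤ 1 := min_le_left _ _

lemma auxf_lip' {a b : ℝ} (hab : a ≤ b) : auxf b - auxf a ≤ b - a := by
  unfold auxf
  rcases le_total 0 a with ha | ha
  · rw [min_eq_left (Real.one_le_exp ha), min_eq_left (Real.one_le_exp (ha.trans hab))]; linarith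
  · rw [min_eq_right (Real.exp_le_one_iff.2 ha)]
    rcases le_total 0 b with hb | hb
    · have := Real.add_one_le_exp a
      have := min_le_left 1 (Real.exp b)
      linarith
    · rw [min_eq_right (Real.exp_le_one_iff.2 hb)]
      have h1 := Real.add_one_le_exp (a - b)
      have h2 : Real.exp a = Real.exp b * Real.exp (a - b) := by rw [← Real.exp_add]; ring_nf
      have h3 := Real.exp_le_one_iff.2 hb
      have h4 := Real.exp_pos b
      rw [h2]
      nlinarith

lemma auxf_mono : Monotone auxf := fun a b hab => by
  unfold auxf; gcongr

lemma auxf_lip (a b : ℝ) : |auxf a - auxf b| ≤ |a - b| := by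
  rcases le_total a b with h | h
  · rw [abs_sub_comm, abs_sub_comm a b, abs_of_nonneg (sub_nonneg.2 (auxf_mono h)),
      abs_of_nonneg (sub_nonneg.2 h)]
    exact auxf_lip' h
  · rw [abs_of_nonneg (sub_nonneg.2 (auxf_mono h)), abs_of_nonneg (sub_nonneg.2 h)]
    exact auxf_lip' h

lemma auxf_integrable {Ω : Type*} [MeasurableSpace Ω] (P : Measure Ω) [IsProbabilityMeasure P]
    (W : Ω → ℝ) (hW : Measurable W) : Integrable (fun x => auxf (W x)) P := by
  refine Integrable.of_bound (auxf_cont.measurable.comp hW).aestronglyMeasurable 1 ?_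
  refine ae_of_all _ fun x => ?_
  rw [Real.norm_eq_abs, abs_of_nonneg (auxf_nonneg _)]; exact auxf_le _

noncomputable def auxh (μ : Measure ℝ) (w : ℝ) : ℝ := ∫ b, auxf (w + b) ∂μ

section
variable (μ : Measure ℝ) [IsProbabilityMeasure μ]

lemma auxh_nonneg (w : ℝ) : 0 ≤ auxh μ w := integral_nonneg fun _ => auxf_nonneg _

lemma auxh_le (w : ℝ) : auxh μ w ≤ 1 := by
  have : auxh μ w ≤ ∫ _, (1 : ℝ) ∂μ :=
    integral_mono (auxf_integrable μ _ (by fun_prop)) (integrable_const _) fun _ => auxf_le _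
  simpa using this

lemma auxh_lip (a b : ℝ) : |auxh μ a - auxh μ b| ≤ min 1 |a - b| := by
  refine le_min ?_ ?_
  · rw [abs_le]
    have := auxh_nonneg μ a
    have := auxh_nonneg μ b
    have := auxh_le μ a
    have := auxh_le μ b
    constructor <;> linarith
  · unfold auxh
    rw [← integral_sub (auxf_integrable μ _ (by fun_prop)) (auxf_integrable μ _ (by fun_prop))]
    refine (abs_integral_le_integral_abs).trans ?_
    have : ∫ x, |auxf (a + x) - auxf (b + x)| ∂μ ≤ ∫ _, |a - b| ∂μ := by
      refine integral_mono_of_nonneg (ae_of_all _ fun _ => abs_nonneg _) (integrable_const _)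
        (ae_of_all _ fun x => ?_)
      have := auxf_lip (a + x) (b + x)
      simpa using this
    simpa using this

lemma auxh_cont : Continuous (auxh μ) := by
  have : LipschitzWith 1 (auxh μ) := LipschitzWith.of_dist_le_mul fun a b => by
    simpa [Real.dist_eq] using (auxh_lip μ a b).trans (min_le_right _ _)
  exact this.continuous
end

lemma aux_pdf (x : ℝ) : gaussianPDFReal 0 1 x = Real.exp (-x ^ 2 / 2) / Real.sqrt (2 * Real.pi) := by
  simp [gaussianPDFReal, div_eq_inv_mul, mul_comm]

lemma aux_cdf (x : ℝ) : stdNormalCDF x = ∫ t in Set.Iic x, gaussianPDFReal 0 1 t := by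
  simp only [stdNormalCDF, aux_pdf]

lemma aux_inner (ℓ : ℝ) (hℓ : 0 < ℓ) (b : ℝ) :
    ∫ g, auxf (ℓ * g - ℓ ^ 2 / 2 + b) ∂(gaussianReal 0 1)
      = stdNormalCDF (b / ℓ - ℓ / 2) + Real.exp b * stdNormalCDF ((-b) / ℓ - ℓ / 2) := by
  set p := gaussianPDFReal 0 1 with hp
  have hpi : Integrable p := integrable_gaussianPDFReal 0 1
  rw [integral_gaussianReal_eq_integral_smul one_ne_zero]
  set c := ℓ / 2 - b / ℓ with hc
  have hci : Integrable (fun g => p g • auxf (ℓ * g - ℓ ^ 2 / 2 + b)) := by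
    refine hpi.mono ?_ (ae_of_all _ fun g => ?_)
    · exact (hpi.aestronglyMeasurable.smul (auxf_cont.comp (by fun_prop)).aestronglyMeasurable)
    · rw [smul_eq_mul, norm_mul]
      refine mul_le_of_le_one_right (norm_nonneg _) ?_
      rw [Real.norm_eq_abs, abs_of_nonneg (auxf_nonneg _)]; exact auxf_le _
  rw [← integral_add_compl (s := Set.Iic c) measurableSet_Iic hci, Set.compl_Iic, add_comm]
  congr 1
  · have h1 : ∫ g in Set.Ioi c, p g • auxf (ℓ * g - ℓ ^ 2 / 2 + b) = ∫ g in Set.Ioi c, p g := by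
      refine setIntegral_congr_fun measurableSet_Ioi fun g hg => ?_
      have : 0 ≤ ℓ * g - ℓ ^ 2 / 2 + b := by
        have h2 : ℓ * c ≤ ℓ * g := by
          have : c ≤ g := le_of_lt hg
          gcongr
        have h3 : ℓ * c = ℓ ^ 2 / 2 - b := by rw [hc]; field_simp
        linarith
      simp only [auxf, smul_eq_mul]
      rw [min_eq_left (Real.one_le_exp this), mul_one]
    rw [h1, aux_cdf, show b / ℓ - ℓ / 2 = -c by rw [hc]; ring]
    have h2 := integral_comp_neg_Iic (-c) p
    rw [neg_neg] at h2
    rw [← h2]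
    congr 1
    ext x
    rw [hp, aux_pdf, aux_pdf]; simp
  · have h1 : ∫ g in Set.Iic c, p g • auxf (ℓ * g - ℓ ^ 2 / 2 + b)
        = ∫ g in Set.Iic c, Real.exp b * p (g - ℓ) := by
      refine setIntegral_congr_fun measurableSet_Iic fun g hg => ?_
      have : ℓ * g - ℓ ^ 2 / 2 + b ≤ 0 := by
        have h2 : ℓ * g ≤ ℓ * c := by
          have : g ≤ c := hg
          gcongr
        have h3 : ℓ * c = ℓ ^ 2 / 2 - b := by rw [hc]; field_simp
        linarith
      simp only [auxf, smul_eq_mul]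
      rw [min_eq_right (Real.exp_le_one_iff.2 this), hp, aux_pdf, aux_pdf, ← mul_div_assoc,
        ← Real.exp_add, div_mul_eq_mul_div, ← Real.exp_add]
      congr 2
      ring
    rw [h1, integral_const_mul, aux_cdf]
    congr 1
    rw [← integral_indicator measurableSet_Iic, ← integral_indicator measurableSet_Iic,
      ← integral_sub_right_eq_self (Set.indicator (Set.Iic (-b / ℓ - ℓ / 2)) _) ℓ]
    congr 1
    ext g
    have : (g ∈ Set.Iic c) ↔ (g - ℓ ∈ Set.Iic (-b / ℓ - ℓ / 2)) := by
      simp only [Set.mem_Iic, hc]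
      constructor <;> intro h <;> ring_nf at h ⊢ <;> linarith
    by_cases hg : g ∈ Set.Iic c
    · rw [Set.indicator_of_mem hg, Set.indicator_of_mem (this.1 hg)]
    · rw [Set.indicator_of_notMem hg, Set.indicator_of_notMem (fun h => hg (this.2 h))]

lemma aux_cdf_nonneg (x : ℝ) : 0 ≤ stdNormalCDF x := by
  rw [aux_cdf]; exact integral_nonneg fun _ => gaussianPDFReal_nonneg _ _ _

lemma aux_cdf_le (x : ℝ) : stdNormalCDF x ≤ 1 := by
  rw [aux_cdf, ← integral_gaussianPDFReal_eq_one 0 (v := 1) one_ne_zero]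
  exact setIntegral_le_integral (integrable_gaussianPDFReal 0 1)
    (ae_of_all _ fun _ => gaussianPDFReal_nonneg _ _ _)

lemma aux_cdf_mono : Monotone stdNormalCDF := fun x y hxy => by
  rw [aux_cdf, aux_cdf]
  exact setIntegral_mono_set (integrable_gaussianPDFReal 0 1).integrableOn
    (ae_of_all _ fun _ => gaussianPDFReal_nonneg _ _ _) (Set.Iic_subset_Iic.2 hxy).eventuallyLE

lemma aux_limit (ρ : ℝ → ℝ) (hρ_meas : Measurable ρ) (hρ_nonneg : ∀ b, 0 ≤ ρ b)
    (μB : Measure ℝ)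
    (hμB : μB = volume.withDensity fun b => ENNReal.ofReal (ρ b))
    (hμB_prob : IsProbabilityMeasure μB)
    (hρ_sym : ∀ b, ρ b = Real.exp (-b) * ρ (-b)) (ℓ : ℝ) (hℓ : 0 < ℓ) :
    ∫ g, auxh μB (ℓ * g - ℓ ^ 2 / 2) ∂(gaussianReal 0 1)
      = 2 * ∫ b, stdNormalCDF (b / ℓ - ℓ / 2) ∂μB := by
  unfold auxh
  rw [integral_integral_swap]
  swap
  · exact auxf_integrable ((gaussianReal 0 1).prod μB)
      (fun q : ℝ × ℝ => ℓ * q.1 - ℓ ^ 2 / 2 + q.2) (by fun_prop)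
  simp_rw [aux_inner ℓ hℓ]
  have hm : Measurable stdNormalCDF := aux_cdf_mono.measurable
  have i1 : Integrable (fun b => stdNormalCDF (b / ℓ - ℓ / 2)) μB := by
    refine Integrable.of_bound (hm.comp (by fun_prop)).aestronglyMeasurable 1
      (ae_of_all _ fun x => ?_)
    rw [Real.norm_eq_abs, abs_of_nonneg (aux_cdf_nonneg _)]; exact aux_cdf_le _
  have i2 : Integrable (fun b => Real.exp b * stdNormalCDF (-b / ℓ - ℓ / 2)) μB := by
    refine Integrable.of_bound
      (Real.measurable_exp.mul (hm.comp (by fun_prop))).aestronglyMeasurable 1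
      (ae_of_all _ fun b => ?_)
    have h0 : 0 ≤ Real.exp b * stdNormalCDF (-b / ℓ - ℓ / 2) :=
      mul_nonneg (Real.exp_pos _).le (aux_cdf_nonneg _)
    rw [Real.norm_eq_abs, abs_of_nonneg h0]
    have h1 := aux_inner ℓ hℓ b
    have h2 : ∫ g, auxf (ℓ * g - ℓ ^ 2 / 2 + b) ∂(gaussianReal 0 1) ≤
        ∫ _, (1 : ℝ) ∂(gaussianReal 0 1) :=
      integral_mono (auxf_integrable _ _ (by fun_prop)) (integrable_const _) fun _ => auxf_le _
    simp only [integral_const, probReal_univ, smul_eq_mul, mul_one] at h2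
    have := aux_cdf_nonneg (b / ℓ - ℓ / 2)
    linarith
  rw [integral_add i1 i2, two_mul]
  congr 1
  have hden : ∀ F : ℝ → ℝ, ∫ b, F b ∂μB = ∫ b, ρ b * F b := fun F => by
    rw [hμB, integral_withDensity_eq_integral_toReal_smul (by fun_prop) (ae_of_all _ fun _ => ENNReal.ofReal_lt_top)]
    simp [ENNReal.toReal_ofReal (hρ_nonneg _)]
  rw [hden, hden, ← integral_neg_eq_self]
  congr 1
  ext b
  rw [hρ_sym b, neg_neg]
  ring

lemma aux_tozero' {Ω : ℕ → Type} [∀ d, MeasurableSpace (Ω d)] (P : ∀ d, Measure (Ω d))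
    [∀ d, IsProbabilityMeasure (P d)] (R : ∀ d, Ω d → ℝ) (hR : ∀ d, Measurable (R d))
    (S : ∀ d, Ω d → ℝ)
    (h : ∀ ε > (0 : ℝ), Tendsto (fun d => P d {x | ε < S d x}) atTop (𝓝 0))
    (hRS : ∀ ε > (0 : ℝ), ∃ δ > (0 : ℝ), ∀ d x, ε < |R d x| → δ < S d x) :
    Tendsto (fun d => ∫ x, min 1 |R d x| ∂(P d)) atTop (𝓝 0) := by
  refine aux_tozero P R hR fun ε hε => ?_
  obtain ⟨δ, hδ, H⟩ := hRS ε hε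
  refine tendsto_of_tendsto_of_tendsto_of_le_of_le tendsto_const_nhds (h δ hδ)
    (fun d => zero_le) (fun d => ?_)
  exact measure_mono fun x hx => H d x hx

lemma aux_min_int {Ω : Type*} [MeasurableSpace Ω] (P : Measure Ω) [IsProbabilityMeasure P]
    (R : Ω → ℝ) (hR : Measurable R) : Integrable (fun x => min 1 |R x|) P := by
  refine Integrable.of_bound (measurable_const.min hR.abs).aestronglyMeasurable 1 ?_
  refine ae_of_all _ fun x => ?_
  rw [Real.norm_eq_abs, abs_of_nonneg (le_min zero_le_one (abs_nonneg _))]; exact min_le_left _ _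

lemma aux_min_le {Ω : Type*} [MeasurableSpace Ω] (P : Measure Ω) [IsProbabilityMeasure P]
    (R : Ω → ℝ) (hR : Integrable R P) (K : ℝ) (hK : ∫ x, |R x| ∂P ≤ |K|) :
    ∫ x, min 1 |R x| ∂P ≤ min 1 |K| := by
  refine le_min ?_ ?_
  · have : ∫ x, min 1 |R x| ∂P ≤ ∫ _, (1 : ℝ) ∂P :=
      integral_mono_of_nonneg (ae_of_all _ fun x => le_min zero_le_one (abs_nonneg _))
        (integrable_const _) (ae_of_all _ fun x => min_le_left _ _)
    simpa using this
  · refine le_trans ?_ hK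
    exact integral_mono_of_nonneg (ae_of_all _ fun x => le_min zero_le_one (abs_nonneg _))
        hR.abs (ae_of_all _ fun x => min_le_right _ _)

lemma auxh_integrable (μ : Measure ℝ) [IsProbabilityMeasure μ]
    {Ω : Type*} [MeasurableSpace Ω] (P : Measure Ω) [IsProbabilityMeasure P]
    (W : Ω → ℝ) (hW : Measurable W) : Integrable (fun x => auxh μ (W x)) P := by
  refine Integrable.of_bound ((auxh_cont μ).measurable.comp hW).aestronglyMeasurable 1 ?_
  refine ae_of_all _ fun x => ?_
  rw [Real.norm_eq_abs, abs_of_nonneg (auxh_nonneg μ _)]; exact auxh_le μ _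

lemma aux_diff (μ : Measure ℝ) [IsProbabilityMeasure μ]
    {Ω : Type*} [MeasurableSpace Ω] (P : Measure Ω) [IsProbabilityMeasure P]
    (V W : Ω → ℝ) (hV : Measurable V) (hW : Measurable W) :
    |∫ x, auxh μ (V x) ∂P - ∫ x, auxh μ (W x) ∂P| ≤ ∫ x, min 1 |V x - W x| ∂P := by
  rw [← integral_sub (auxh_integrable μ P V hV) (auxh_integrable μ P W hW)]
  refine abs_integral_le_integral_abs.trans ?_
  exact integral_mono_of_nonneg (ae_of_all _ fun x => abs_nonneg _)
    (aux_min_int P _ (hV.sub hW)) (ae_of_all _ fun x => auxh_lip μ _ _)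

lemma aux_min_add (a b : ℝ) : min 1 |a + b| ≤ min 1 |a| + min 1 |b| := by
  have := abs_add_le a b
  have := abs_nonneg a
  have := abs_nonneg b
  rcases min_cases 1 |a + b| with h | h <;> rcases min_cases 1 |a| with h' | h' <;>
    rcases min_cases 1 |b| with h'' | h'' <;> linarith

/-- E1 : removal of the quadratic weight -/
lemma aux_E1 (μB : Measure ℝ) [IsProbabilityMeasure μB] {d : ℕ} (μX : Measure (Fin d → ℝ))
    [IsProbabilityMeasure μX] (T : Matrix (Fin d) (Fin d) ℝ) (hT : T.IsSymm)
    (htr : 0 < T.trace) (W : (Fin d → ℝ) × (Fin d → ℝ) → ℝ) (hW : Measurable W) :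
    |(∫ p : ((Fin d → ℝ) × (Fin d → ℝ)) × ℝ, auxQ T p.1.2 * auxf (W p.1 + p.2)
        ∂((μX.prod (stdGaussian d)).prod μB)) / T.trace
      - ∫ p, auxh μB (W p) ∂(μX.prod (stdGaussian d))|
      ≤ Real.sqrt (Var[fun x => x ^ 2; gaussianReal 0 1] * ((T * T).trace / T.trace ^ 2)) := by
  obtain ⟨hQi, hQ⟩ := aux_quad T hT
  set P := μX.prod (stdGaussian d) with hP
  have hQP : Integrable (fun p : (Fin d → ℝ) × (Fin d → ℝ) => auxQ T p.2) P := hQi.comp_snd μX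
  have hQPB : Integrable (fun p : ((Fin d → ℝ) × (Fin d → ℝ)) × ℝ => auxQ T p.1.2) (P.prod μB) :=
    hQP.comp_fst μB
  have hI : Integrable (fun p : ((Fin d → ℝ) × (Fin d → ℝ)) × ℝ =>
      auxQ T p.1.2 * auxf (W p.1 + p.2)) (P.prod μB) := by
    refine hQPB.mul_bdd (c := 1) ?_ (ae_of_all _ fun p => ?_)
    · exact (auxf_cont.measurable.comp (by fun_prop)).aestronglyMeasurable
    · rw [Real.norm_eq_abs, abs_of_nonneg (auxf_nonneg _)]; exact auxf_le _
  rw [integral_prod _ hI]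
  have e1 : ∀ p : (Fin d → ℝ) × (Fin d → ℝ), ∫ b, auxQ T p.2 * auxf (W p + b) ∂μB
      = auxQ T p.2 * auxh μB (W p) := fun p => by
    rw [integral_const_mul]; rfl
  simp only [e1]
  have hI2 : Integrable (fun p : (Fin d → ℝ) × (Fin d → ℝ) => auxQ T p.2 * auxh μB (W p)) P := by
    refine hQP.mul_bdd (c := 1) ?_ (ae_of_all _ fun p => ?_)
    · exact ((auxh_cont μB).measurable.comp hW).aestronglyMeasurable
    · rw [Real.norm_eq_abs, abs_of_nonneg (auxh_nonneg _ _)]; exact auxh_le _ _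
  rw [← integral_div, ← integral_sub (hI2.div_const _) (auxh_integrable μB P W hW)]
  have hbd : Integrable (fun p : (Fin d → ℝ) × (Fin d → ℝ) => |auxQ T p.2 - T.trace| / T.trace) P :=
    ((hQP.sub (integrable_const _)).abs).div_const _
  calc _ ≤ ∫ p, |auxQ T p.2 * auxh μB (W p) / T.trace - auxh μB (W p)| ∂P :=
        abs_integral_le_integral_abs
    _ ≤ ∫ p, |auxQ T p.2 - T.trace| / T.trace ∂P := by
        refine integral_mono_of_nonneg (ae_of_all _ fun x => abs_nonneg _) hbd
          (ae_of_all _ fun p => ?_)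
        dsimp only
        have : auxQ T p.2 * auxh μB (W p) / T.trace - auxh μB (W p)
            = (auxQ T p.2 - T.trace) / T.trace * auxh μB (W p) := by field_simp
        rw [this, abs_mul, abs_div, abs_of_pos htr, abs_of_nonneg (auxh_nonneg μB _)]
        exact mul_le_of_le_one_right (by positivity) (auxh_le _ _)
    _ = (∫ z, |auxQ T z - T.trace| ∂(stdGaussian d)) / T.trace := by
        rw [integral_div, hP]
        congr 1
        rw [integral_fun_snd (μ := μX) (ν := stdGaussian d) (fun z => |auxQ T z - T.trace|)]
        simp
    _ ≤ Real.sqrt (Var[fun x => x ^ 2; gaussianReal 0 1] * (T * T).trace) / T.trace := by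
        gcongr
    _ = _ := by
        rw [← mul_div_assoc, Real.sqrt_div' _ (by positivity), Real.sqrt_sq htr.le]

lemma aux_D1 {d : ℕ} (μX : Measure (Fin d → ℝ)) [IsProbabilityMeasure μX]
    {L : (Fin d → ℝ) → ℝ} (hL : ContDiff ℝ 2 L) (c s : ℝ) (hc : 0 < c) (hs : 0 < s)
    (hm : Measurable fun p : (Fin d → ℝ) × (Fin d → ℝ) =>
      c * ((auxQ (hessian L p.1) p.2 - (hessian L p.1).trace) / s ^ 2))
    (hm2 : Measurable fun x => (hessian L x * hessian L x).trace) :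
    ∫ p : (Fin d → ℝ) × (Fin d → ℝ),
      min 1 |c * ((auxQ (hessian L p.1) p.2 - (hessian L p.1).trace) / s ^ 2)|
        ∂(μX.prod (stdGaussian d))
      ≤ ∫ x, min 1 |c * Real.sqrt (Var[fun x => x ^ 2; gaussianReal 0 1] *
          ((hessian L x * hessian L x).trace / s ^ 4))| ∂μX := by
  rw [integral_prod _ (aux_min_int _ _ hm)]
  refine integral_mono_of_nonneg (ae_of_all _ fun x => integral_nonneg fun z =>
    le_min zero_le_one (abs_nonneg _)) (aux_min_int _ _ (by fun_prop)) (ae_of_all _ fun x => ?_)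
  obtain ⟨hQi, hQ⟩ := aux_quad _ (aux_hess_symm hL x)
  dsimp only
  refine aux_min_le _ (fun z => c * ((auxQ (hessian L x) z - (hessian L x).trace) / s ^ 2))
    (((hQi.sub (integrable_const _)).div_const _).const_mul _) _ ?_
  refine le_trans ?_ (le_abs_self _)
  simp_rw [abs_mul, abs_div, abs_of_pos hc, abs_of_pos (pow_pos hs 2)]
  rw [integral_const_mul, integral_div]
  gcongr
  calc _ ≤ Real.sqrt (Var[fun x => x ^ 2; gaussianReal 0 1] *
          (hessian L x * hessian L x).trace) / s ^ 2 := by gcongr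
    _ = _ := by
      rw [← mul_div_assoc, Real.sqrt_div' _ (by positivity), show s ^ 4 = (s ^ 2) ^ 2 by ring,
        Real.sqrt_sq (by positivity)]

lemma aux_E3 (μB : Measure ℝ) [IsProbabilityMeasure μB] {d : ℕ} (μX : Measure (Fin d → ℝ))
    [IsProbabilityMeasure μX] {L : (Fin d → ℝ) → ℝ} (ℓ s : ℝ) (hs : 0 < s)
    (hm : Measurable fun p : (Fin d → ℝ) × (Fin d → ℝ) =>
      ℓ / s * (∑ i, fderiv ℝ L p.1 (Pi.single i 1) * p.2 i) - ℓ ^ 2 / 2)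
    (hm2 : Measurable (gradNormSq L)) :
    |∫ p : (Fin d → ℝ) × (Fin d → ℝ),
      auxh μB (ℓ / s * (∑ i, fderiv ℝ L p.1 (Pi.single i 1) * p.2 i) - ℓ ^ 2 / 2)
        ∂(μX.prod (stdGaussian d))
      - ∫ g, auxh μB (ℓ * g - ℓ ^ 2 / 2) ∂(gaussianReal 0 1)|
      ≤ ∫ x, min 1 |ℓ * (Real.sqrt (gradNormSq L x) / s - 1)
          * ∫ g, |g| ∂(gaussianReal 0 1)| ∂μX := by
  have hc := auxh_cont μB
  have hgi : Integrable (fun g : ℝ => g) (gaussianReal 0 1) :=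
    (memLp_id_gaussianReal (μ := 0) (v := 1) 1).integrable (by simp)
  rw [integral_prod _ (auxh_integrable μB _ _ hm)]
  have e1 : ∀ x, ∫ z, auxh μB (ℓ / s * (∑ i, fderiv ℝ L x (Pi.single i 1) * z i) - ℓ ^ 2 / 2)
      ∂(stdGaussian d) = ∫ g, auxh μB (ℓ / s * (Real.sqrt (gradNormSq L x) * g) - ℓ ^ 2 / 2)
        ∂(gaussianReal 0 1) := fun x =>
    aux_lin (fun i => fderiv ℝ L x (Pi.single i 1)) (fun u => auxh μB (ℓ / s * u - ℓ ^ 2 / 2))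
      (by fun_prop)
  have e2 : ∫ g, auxh μB (ℓ * g - ℓ ^ 2 / 2) ∂(gaussianReal 0 1)
      = ∫ x, (∫ g, auxh μB (ℓ * g - ℓ ^ 2 / 2) ∂(gaussianReal 0 1)) ∂μX := by simp
  have hi := (auxh_integrable μB (μX.prod (stdGaussian d)) _ hm).integral_prod_left
  rw [e2, ← integral_sub hi (integrable_const _)]
  simp only [e1]
  refine abs_integral_le_integral_abs.trans ?_
  refine integral_mono_of_nonneg (ae_of_all _ fun x => abs_nonneg _)
    (aux_min_int _ _ (by fun_prop)) (ae_of_all _ fun x => ?_)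
  refine (aux_diff μB _ _ _ (by fun_prop) (by fun_prop)).trans ?_
  refine aux_min_le _ _ ?_ _ ?_
  · exact (((hgi.const_mul _).const_mul _).sub (integrable_const _)).sub
      ((hgi.const_mul _).sub (integrable_const _))
  · have e3 : ∀ g : ℝ, |ℓ / s * (Real.sqrt (gradNormSq L x) * g) - ℓ ^ 2 / 2
        - (ℓ * g - ℓ ^ 2 / 2)| = |ℓ * (Real.sqrt (gradNormSq L x) / s - 1)| * |g| := fun g => by
      rw [← abs_mul]; congr 1; ring
    simp_rw [e3]
    rw [integral_const_mul, abs_mul _ (∫ g, |g| ∂(gaussianReal 0 1)),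
      abs_of_nonneg (integral_nonneg fun g => abs_nonneg _)]

/-- Theorem 1, part 2: limiting expected squared jump distance.
In the setting of Theorem 1 part 1, with weight matrices `T^(d)` that are symmetric
positive definite and satisfy `Trace[(T^(d))²]/(Trace T^(d))² → 0`, the rescaled
expected squared jump distance
`((s^(d))²/Trace T^(d)) (λ^(d))² E[‖Z‖²_{T^(d)} min(1, exp(ΔL + B))]`
converges to `J(ℓ) = ℓ² α(ℓ)` where `α(ℓ) = 2 E[Φ(B/ℓ − ℓ/2)]`. -/
theorem stmt4
    (pden : (d : ℕ) → (Fin d → ℝ) → ℝ) (hπ_pos : ∀ d x, 0 < pden d x)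
    (L : (d : ℕ) → (Fin d → ℝ) → ℝ)
    (hL : ∀ d, L d = fun x => Real.log (pden d x))
    (hL_smooth : ∀ d, ContDiff ℝ 2 (L d))
    (μX : (d : ℕ) → Measure (Fin d → ℝ))
    (hμX : ∀ d, μX d = volume.withDensity fun x => ENNReal.ofReal (pden d x))
    (hμX_prob : ∀ d, IsProbabilityMeasure (μX d))
    (ρ : ℝ → ℝ) (hρ_meas : Measurable ρ) (hρ_nonneg : ∀ b, 0 ≤ ρ b)
    (μB : Measure ℝ)
    (hμB : μB = volume.withDensity fun b => ENNReal.ofReal (ρ b))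
    (hμB_prob : IsProbabilityMeasure μB)
    (hρ_sym : ∀ b, ρ b = Real.exp (-b) * ρ (-b))
    (s : ℕ → ℝ) (hs_pos : ∀ d, 0 < s d)
    -- (i) ‖∇L^(d)(X)‖ / s^(d) → 1 in probability
    (hgrad : ∀ ε > (0 : ℝ), Tendsto (fun d =>
      μX d {x | ε < |Real.sqrt (gradNormSq (L d) x) / s d - 1|}) atTop (𝓝 0))
    -- (ii) ΔL^(d)(X) / (s^(d))² → −1 in probability
    (hlap : ∀ ε > (0 : ℝ), Tendsto (fun d =>
      μX d {x | ε < |Matrix.trace (hessian (L d) x) / (s d) ^ 2 + 1|}) atTop (𝓝 0))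
    -- (iii) Trace[(H^(d)(X))²] / (s^(d))⁴ → 0 in probability
    (htrace : ∀ ε > (0 : ℝ), Tendsto (fun d =>
      μX d {x | ε < |Matrix.trace (hessian (L d) x * hessian (L d) x) / (s d) ^ 4|})
      atTop (𝓝 0))
    -- (iv) regularity of the Hessian
    (hhess_reg : ∀ σ > (0 : ℝ), ∀ ε > (0 : ℝ), Tendsto (fun d =>
      ((μX d).prod (stdGaussian d)) {p | ε < ⨆ t ∈ Set.Ioo (0 : ℝ) 1,
        |(∑ i, ∑ j, p.2 i *
            ((hessian (L d) (p.1 + (t * σ / s d) • p.2) - hessian (L d) p.1) i j) * p.2 j)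
          / (s d) ^ 2|}) atTop (𝓝 0))
    (ℓ : ℝ) (hℓ : 0 < ℓ) (lam : ℕ → ℝ) (hlam : ∀ d, lam d = ℓ / s d)
    -- the jump-distance matrices T^(d)
    (T : (d : ℕ) → Matrix (Fin d) (Fin d) ℝ)
    (hT_symm : ∀ d, (T d).IsSymm) (hT_posdef : ∀ d, (T d).PosDef)
    (hT_ecc : Tendsto (fun d =>
      Matrix.trace (T d * T d) / (Matrix.trace (T d)) ^ 2) atTop (𝓝 0)) :
    Tendsto (fun d => (s d) ^ 2 / Matrix.trace (T d) * (lam d) ^ 2 *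
        ∫ p : ((Fin d → ℝ) × (Fin d → ℝ)) × ℝ,
          (∑ i, ∑ j, p.1.2 i * T d i j * p.1.2 j) *
            min 1 (Real.exp (L d (p.1.1 + lam d • p.1.2) - L d p.1.1 + p.2))
        ∂(((μX d).prod (stdGaussian d)).prod μB))
      atTop (𝓝 (ℓ ^ 2 * (2 * ∫ b, stdNormalCDF (b / ℓ - ℓ / 2) ∂μB))) := by
  classical
  set C := Var[fun x => x ^ 2; gaussianReal 0 1] with hC
  have hC0 : 0 ≤ C := variance_nonneg _ _
  set κ := ∫ g, |g| ∂(gaussianReal 0 1) with hκ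
  have hκ0 : 0 ≤ κ := integral_nonneg fun _ => abs_nonneg _
  set W : ∀ d, (Fin d → ℝ) × (Fin d → ℝ) → ℝ :=
    fun d p => L d (p.1 + lam d • p.2) - L d p.1 with hW
  set V : ∀ d, (Fin d → ℝ) × (Fin d → ℝ) → ℝ :=
    fun d p => ℓ / s d * (∑ i, fderiv ℝ (L d) p.1 (Pi.single i 1) * p.2 i) - ℓ ^ 2 / 2 with hV
  -- measurability
  have hLc : ∀ d, Continuous (L d) := fun d => (hL_smooth d).continuous
  have hDc : ∀ d, Continuous (fderiv ℝ (L d)) := fun d =>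
    (hL_smooth d).continuous_fderiv (by norm_num)
  have hHc : ∀ d, Continuous (hessian (L d)) := fun d => aux_hess_cont (hL_smooth d)
  have hHij : ∀ d i j, Continuous (fun x => hessian (L d) x i j) := fun d i j =>
    (hHc d).matrix_elem i j
  have hWm : ∀ d, Measurable (W d) := fun d => by
    have := hLc d
    exact Continuous.measurable (by fun_prop)
  have hVm : ∀ d, Measurable (V d) := fun d => by
    have := hDc d
    exact Continuous.measurable (by fun_prop)
  have htrm : ∀ d, Measurable fun x => (hessian (L d) x).trace := fun d =>
    (hHc d).matrix_trace.measurable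
  have htr2m : ∀ d, Measurable fun x => (hessian (L d) x * hessian (L d) x).trace := fun d =>
    ((hHc d).matrix_mul (hHc d)).matrix_trace.measurable
  have hgm : ∀ d, Measurable (gradNormSq (L d)) := fun d => by
    have := hDc d
    unfold gradNormSq
    exact Continuous.measurable (by fun_prop)
  have hQm : ∀ d, Measurable fun p : (Fin d → ℝ) × (Fin d → ℝ) =>
      auxQ (hessian (L d) p.1) p.2 := fun d => by
    unfold auxQ
    have := hHij d
    exact Continuous.measurable (by fun_prop)
  set c := ℓ ^ 2 / 2 with hc
  have hc0 : 0 < c := by positivity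
  set D1 : ∀ d, (Fin d → ℝ) × (Fin d → ℝ) → ℝ := fun d p =>
    c * ((auxQ (hessian (L d) p.1) p.2 - (hessian (L d) p.1).trace) / (s d) ^ 2) with hD1
  set D2 : ∀ d, (Fin d → ℝ) → ℝ := fun d x =>
    c * ((hessian (L d) x).trace / (s d) ^ 2 + 1) with hD2
  have hD1m : ∀ d, Measurable (D1 d) := fun d =>
    (((hQm d).sub ((htrm d).comp measurable_fst)).div_const _).const_mul _
  have hD2m : ∀ d, Measurable (D2 d) := fun d =>
    (((htrm d).div_const _).add_const _).const_mul _
  set D3 : ∀ d, (Fin d → ℝ) × (Fin d → ℝ) → ℝ := fun d p =>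
    W d p - V d p - (D1 d p + D2 d p.1) with hD3
  have hD3m : ∀ d, Measurable (D3 d) := fun d =>
    ((hWm d).sub (hVm d)).sub ((hD1m d).add ((hD2m d).comp measurable_fst))
  -- limits
  have lim3 : Tendsto (fun d => ∫ p, min 1 |D3 d p| ∂((μX d).prod (stdGaussian d)))
      atTop (𝓝 0) := by
    refine aux_tozero' (fun d => (μX d).prod (stdGaussian d)) D3 hD3m _ (hhess_reg ℓ hℓ) ?_
    intro ε hε
    refine ⟨ε / c, by positivity, fun d p hp => ?_⟩
    have h1 := aux_rem (hL_smooth d) p.1 p.2 ℓ (s d) (hs_pos d)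
    rw [div_lt_iff₀' hc0]
    refine lt_of_lt_of_le hp (le_trans (le_of_eq ?_) h1)
    congr 1
    simp only [hD3, hW, hV, hD1, hD2, hlam]
    ring
  have lim2 : Tendsto (fun d => ∫ x, min 1 |D2 d x| ∂(μX d)) atTop (𝓝 0) := by
    refine aux_tozero' μX D2 hD2m _ hlap ?_
    intro ε hε
    refine ⟨ε / c, by positivity, fun d x hx => ?_⟩
    rw [div_lt_iff₀' hc0]
    simpa only [hD2, abs_mul, abs_of_pos hc0] using hx
  have lim1' : Tendsto (fun d => ∫ x, min 1 |c * Real.sqrt (C *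
      ((hessian (L d) x * hessian (L d) x).trace / s d ^ 4))| ∂(μX d)) atTop (𝓝 0) := by
    refine aux_tozero' μX _ (fun d => ?_) _ htrace ?_
    · have := htr2m d
      fun_prop
    intro ε hε
    refine ⟨(ε / c) ^ 2 / (C + 1), by positivity, fun d x hx => ?_⟩
    by_contra hcon
    push Not at hcon
    rw [le_div_iff₀ (by positivity)] at hcon
    rw [abs_mul, abs_of_pos hc0, abs_of_nonneg (Real.sqrt_nonneg _), ← div_lt_iff₀' hc0,
      Real.lt_sqrt (by positivity)] at hx
    set v := (hessian (L d) x * hessian (L d) x).trace / s d ^ 4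
    have h1 := le_abs_self v
    have h2 := abs_nonneg v
    nlinarith [mul_le_mul_of_nonneg_left h1 hC0]
  have lim1 : Tendsto (fun d => ∫ p, min 1 |D1 d p| ∂((μX d).prod (stdGaussian d)))
      atTop (𝓝 0) := by
    refine tendsto_of_tendsto_of_tendsto_of_le_of_le tendsto_const_nhds lim1'
      (fun d => integral_nonneg fun p => le_min zero_le_one (abs_nonneg _)) (fun d => ?_)
    exact aux_D1 (μX d) (hL_smooth d) c (s d) hc0 (hs_pos d) (hD1m d) (htr2m d)
  have lim0 : Tendsto (fun d => ∫ x, min 1 |ℓ * (Real.sqrt (gradNormSq (L d) x) / s d - 1) * κ|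
      ∂(μX d)) atTop (𝓝 0) := by
    refine aux_tozero' μX _ (fun d => ?_) _ hgrad ?_
    · have := hgm d
      fun_prop
    intro ε hε
    refine ⟨ε / (ℓ * (κ + 1)), by positivity, fun d x hx => ?_⟩
    rw [div_lt_iff₀' (by positivity)]
    rw [abs_mul, abs_mul, abs_of_pos hℓ, abs_of_nonneg hκ0] at hx
    nlinarith [mul_nonneg hℓ.le (abs_nonneg (Real.sqrt (gradNormSq (L d) x) / s d - 1))]
  have limT : Tendsto (fun d => Real.sqrt (C * ((T d * T d).trace / (T d).trace ^ 2)))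
      atTop (𝓝 0) := by
    have := (Real.continuous_sqrt.tendsto _).comp (hT_ecc.const_mul C)
    simpa [Function.comp_def] using this
  set K := ∫ g, auxh μB (ℓ * g - ℓ ^ 2 / 2) ∂(gaussianReal 0 1) with hK
  have hKlim : K = 2 * ∫ b, stdNormalCDF (b / ℓ - ℓ / 2) ∂μB :=
    aux_limit ρ hρ_meas hρ_nonneg μB hμB hμB_prob hρ_sym ℓ hℓ
  rw [← hKlim]
  set J : ℕ → ℝ := fun d => (∫ p : ((Fin d → ℝ) × (Fin d → ℝ)) × ℝ,
    auxQ (T d) p.1.2 * auxf (W d p.1 + p.2)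
        ∂(((μX d).prod (stdGaussian d)).prod μB)) / (T d).trace with hJ
  have hJlim : Tendsto J atTop (𝓝 K) := by
    have hsum := ((limT.add ((lim3.add (lim1.add lim2)))).add lim0)
    simp only [add_zero] at hsum
    rw [tendsto_iff_norm_sub_tendsto_zero]
    refine squeeze_zero' (Eventually.of_forall fun d => norm_nonneg _) ?_ hsum
    filter_upwards [eventually_ge_atTop 1] with d hd
    haveI : Nonempty (Fin d) := ⟨⟨0, hd⟩⟩
    have htr : 0 < (T d).trace := (hT_posdef d).trace_pos
    have b1 := aux_E1 μB (μX d) (T d) (hT_symm d) htr (W d) (hWm d)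
    have b2 := aux_diff μB ((μX d).prod (stdGaussian d)) (W d) (V d) (hWm d) (hVm d)
    have b3 := aux_E3 μB (μX d) ℓ (s d) (hs_pos d) (hVm d) (hgm d)
    have b4 : ∫ p, min 1 |W d p - V d p| ∂((μX d).prod (stdGaussian d)) ≤
        ∫ p, min 1 |D3 d p| ∂((μX d).prod (stdGaussian d)) +
        (∫ p, min 1 |D1 d p| ∂((μX d).prod (stdGaussian d)) + ∫ x, min 1 |D2 d x| ∂(μX d)) := by
      have i1 := aux_min_int ((μX d).prod (stdGaussian d)) _ (hD1m d)
      have i2 := aux_min_int ((μX d).prod (stdGaussian d)) _ ((hD2m d).comp measurable_fst)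
      have i3 := aux_min_int ((μX d).prod (stdGaussian d)) _ (hD3m d)
      have e1 : ∫ x, min 1 |D2 d x| ∂(μX d) =
          ∫ p, min 1 |(D2 d ∘ Prod.fst) p| ∂((μX d).prod (stdGaussian d)) := by
        have := integral_fun_fst (μ := μX d) (ν := stdGaussian d) (fun x => min 1 |D2 d x|)
        simp only [Function.comp]
        rw [this]; simp
      have i12 : Integrable (fun p => min 1 |D1 d p| + min 1 |(D2 d ∘ Prod.fst) p|)
          ((μX d).prod (stdGaussian d)) := i1.add i2
      rw [e1, ← integral_add i1 i2, ← integral_add i3 i12]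
      refine integral_mono_of_nonneg (ae_of_all _ fun p => le_min zero_le_one (abs_nonneg _))
        (i3.add i12) (ae_of_all _ fun p => ?_)
      have e2 : W d p - V d p = D3 d p + (D1 d p + D2 d p.1) := by
        simp only [hD3]; ring
      dsimp only
      rw [e2]
      refine (aux_min_add _ _).trans ?_
      gcongr
      exact aux_min_add _ _
    rw [Real.norm_eq_abs]
    have t1 := abs_sub_le (J d) (∫ p, auxh μB (W d p) ∂((μX d).prod (stdGaussian d))) K
    have t2 := abs_sub_le (∫ p, auxh μB (W d p) ∂((μX d).prod (stdGaussian d)))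
      (∫ p, auxh μB (V d p) ∂((μX d).prod (stdGaussian d))) K
    linarith
  refine (hJlim.const_mul (ℓ ^ 2)).congr fun d => ?_
  simp only [hJ, hlam, hW, auxQ, auxf]
  have := (hs_pos d).ne'
  field_simp
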